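/- arXiv:cs/0505026 — 2 statements merged into one kernel-verified Lean document; each statement's English description precedes it below -/
import Mathlib

section
/- The validity B(c) → □B(c) over monotonically increasing reactive sequences: if a monotonically increasing reactive sequence s satisfies B(e) for a finite constraint e, then every suffix s' ≤ s satisfies B(e), i.e. s ⊨ □B(e). -/
/-- A simple constraint system: a non-empty set of tokens `C` together with an
entailment relation `entail ⊆ 𝒫_f(C) × C` satisfying (C1) and (C2). -/
structure SCS (C : Type) where
  entail : Finset C → C → Prop
  C1 : ∀ u P, P ∈ u → entail u P
  C2 : ∀ u v Q, (∀ P ∈ v, entail u P) → entail v Q → entail u Q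

/-- The entailment relation extended to pairs of finite constraints:
`u ⊢ v` iff `u ⊢ P` for every token `P ∈ v`. -/
def SCS.Entails {C : Type} (S : SCS C) (u v : Finset C) : Prop :=
  ∀ P ∈ v, S.entail u P

/-- Temporal formulas: φ ::= K(c) | B(c) | ¬φ | φ ∧ ψ | ○φ | φ U ψ,
where `c` ranges over finite constraints. -/
inductive TForm (C : Type) : Type where
  | K : Finset C → TForm C
  | B : Finset C → TForm C
  | neg : TForm C → TForm C
  | and : TForm C → TForm C → TForm C
  | next : TForm C → TForm C
  | until : TForm C → TForm C → TForm C

/-- A reactive sequence is a non-empty finite sequence of reactions, modelled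
as a non-empty `List (Finset C × Finset C)`; `first s = s.headI` and
`next s = s.tail`.  Suffixes `s' ≤ s` are the non-empty list suffixes
(`s' <:+ s`), and `s' < s''` means `s'` is a proper suffix of `s''`.
Satisfaction of temporal formulas on reactive sequences:
* `s ⊨ K(e)` iff the second component of `first s` entails `e`;
* `s ⊨ B(e)` iff the first component of `first s` entails `e`;
* `s ⊨ ¬φ` iff not `s ⊨ φ`; `s ⊨ φ ∧ ψ` iff `s ⊨ φ` and `s ⊨ ψ`;
* `s ⊨ ○φ` iff `next s ⊨ φ`;
* `s ⊨ φ U ψ` iff some suffix `s' ≤ s` satisfies `ψ` and every suffix `s''`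
  with `s' < s'' ≤ s` satisfies `φ`. -/
def Sat {C : Type} (S : SCS C) : TForm C → List (Finset C × Finset C) → Prop
  | .K e, s => S.Entails (s.headI).2 e
  | .B e, s => S.Entails (s.headI).1 e
  | .neg φ, s => ¬ Sat S φ s
  | .and φ ψ, s => Sat S φ s ∧ Sat S ψ s
  | .next φ, s => Sat S φ s.tail
  | .until φ ψ, s => ∃ s' : List (Finset C × Finset C),
      s' <:+ s ∧ s' ≠ [] ∧ Sat S ψ s' ∧
      ∀ s'' : List (Finset C × Finset C), s' <:+ s'' → s'' ≠ s' → s'' <:+ s → Sat S φ s''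

/-- The formula `true`, satisfied by every reactive sequence. -/
def TForm.tt (C : Type) : TForm C := .K ∅

/-- The derived eventually operator `◇φ := true U φ`. -/
def TForm.ev {C : Type} (φ : TForm C) : TForm C := .until (.tt C) φ

/-- The derived always operator `□φ := ¬(true U ¬φ)`. -/
def TForm.always {C : Type} (φ : TForm C) : TForm C := .neg (.until (.tt C) (.neg φ))

/-- A reactive sequence ⟨c₁,d₁⟩⋯⟨cₙ,dₙ⟩ is monotonically increasing if
`dᵢ ⊢ cᵢ` for every `i` and `c_{j+1} ⊢ d_j` for every `j`. -/
def MonoInc {C : Type} (S : SCS C) (s : List (Finset C × Finset C)) : Prop :=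
  (∀ i, (h : i < s.length) → S.Entails s[i].2 s[i].1) ∧
  (∀ j, (h : j + 1 < s.length) → S.Entails s[j + 1].1 (s[j]'(Nat.lt_of_succ_lt h)).2)

/-- Beliefs persist along a monotonically increasing sequence: from one reaction to the next,
`c_{j+1} ⊢ d_j ⊢ c_j ⊢ e`, so `B(e)` passes to every non-empty suffix by induction on the list. -/
theorem sat_B_of_suffix {C : Type} (S : SCS C) (e : Finset C) :
    ∀ s : List (Finset C × Finset C), MonoInc S s → Sat S (.B e) s →
      ∀ s', s' <:+ s → s' ≠ [] → Sat S (.B e) s'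
  | [], _, _, s', hs, hne => absurd (List.suffix_nil.mp hs) hne
  | [a], _, hB, s', hs, hne => by
    rcases List.suffix_cons_iff.mp hs with rfl | h
    · exact hB
    · exact absurd (List.suffix_nil.mp h) hne
  | a :: b :: t, hm, hB, s', hs, hne => by
    rcases List.suffix_cons_iff.mp hs with rfl | h
    · exact hB
    have trans : ∀ {u v w : Finset C}, S.Entails u v → S.Entails v w → S.Entails u w :=
      fun huv hvw P hP => S.C2 _ _ P huv (hvw P hP)
    have hda : S.Entails a.2 a.1 := hm.1 0 (by simp)
    have hba : S.Entails b.1 a.2 := hm.2 0 (by simp)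
    have hae : S.Entails a.1 e := hB
    have htail : MonoInc S (b :: t) :=
      ⟨fun i hi => hm.1 (i + 1) (Nat.succ_lt_succ hi),
        fun j hj => hm.2 (j + 1) (Nat.succ_lt_succ hj)⟩
    have hbe : Sat S (.B e) (b :: t) := trans (trans hba hda) hae
    exact sat_B_of_suffix S e (b :: t) htail hbe s' h hne

/-- The validity B(c) → □B(c): if a monotonically increasing reactive sequence
s satisfies B(e), then every suffix s' ≤ s satisfies B(e), i.e. s ⊨ □B(e). -/
theorem belief_always (C : Type) [Nonempty C] (S : SCS C)
    (s : List (Finset C × Finset C)) (hne : s ≠ [])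
    (hmono : MonoInc S s) (e : Finset C)
    (hB : Sat S (.B e) s) :
    (∀ s', s' <:+ s → s' ≠ [] → Sat S (.B e) s') ∧ Sat S (TForm.always (.B e)) s := by
  have h := sat_B_of_suffix S e s hmono hB
  exact ⟨h, fun ⟨s', hs, hne', hneg, _⟩ => hneg (h s' hs hne')⟩
end

section
/- The validity K(c) → □K(c) over monotonically increasing reactive sequences: if a monotonically increasing reactive sequence s satisfies K(e) for a finite constraint e, then every suffix s' ≤ s satisfies K(e), i.e. s ⊨ □K(e). -/
/-- Transitivity of entailment between finite constraints, from (C2). -/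
theorem SCS.Entails.trans {C : Type} {S : SCS C} {u v w : Finset C}
    (huv : S.Entails u v) (hvw : S.Entails v w) : S.Entails u w :=
  fun P hP => S.C2 u v P huv (hvw P hP)

theorem MonoInc.tail {C : Type} {S : SCS C} {a : Finset C × Finset C}
    {s : List (Finset C × Finset C)} (h : MonoInc S (a :: s)) : MonoInc S s := by
  refine ⟨fun i hi => ?_, fun j hj => ?_⟩
  · exact h.1 (i + 1) (by simpa using hi)
  · exact h.2 (j + 1) (by simpa using hj)

/-- Knowledge propagates along suffixes: for consecutive reactions
`d_{j+1} ⊢ c_{j+1} ⊢ d_j`, so `d_j ⊢ e` gives `d_{j+1} ⊢ e`. -/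
theorem MonoInc.sat_K_of_suffix {C : Type} {S : SCS C} {e : Finset C}
    {s : List (Finset C × Finset C)} (hmono : MonoInc S s) (hK : Sat S (.K e) s) :
    ∀ s', s' <:+ s → s' ≠ [] → Sat S (.K e) s' := by
  induction s with
  | nil => exact fun s' h hne => absurd (List.suffix_nil.mp h) hne
  | cons a s ih =>
    intro s' h hne
    rcases List.suffix_cons_iff.mp h with rfl | h
    · exact hK
    · cases s with
      | nil => exact absurd (List.suffix_nil.mp h) hne
      | cons b t =>
        have hb : S.Entails b.2 b.1 := hmono.1 1 (by simp)
        have hba : S.Entails b.1 a.2 := hmono.2 0 (by simp)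
        have hK' : S.Entails a.2 e := by simpa [Sat] using hK
        refine ih hmono.tail ?_ s' h hne
        simpa [Sat] using (hb.trans hba).trans hK'

/-- The validity K(c) → □K(c): if a monotonically increasing reactive sequence
s satisfies K(e), then every suffix s' ≤ s satisfies K(e), i.e. s ⊨ □K(e). -/
theorem knowledge_always (C : Type) [Nonempty C] (S : SCS C)
    (s : List (Finset C × Finset C)) (hne : s ≠ [])
    (hmono : MonoInc S s) (e : Finset C)
    (hK : Sat S (.K e) s) :
    (∀ s', s' <:+ s → s' ≠ [] → Sat S (.K e) s') ∧ Sat S (TForm.always (.K e)) s := by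
  have hall := hmono.sat_K_of_suffix hK
  refine ⟨hall, ?_⟩
  simp only [TForm.always, Sat]
  rintro ⟨s', hs', hne', hnot, -⟩
  exact hnot (hall s' hs' hne')
end
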